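/- Let f and g be two S¹-embeddings of the complete bipartite graph K_{3,2} that differ by a single exchange of two vertices, i.e., g = f ∘ τ for some transposition τ of two vertices of K_{3,2}. Then the number of unordered pairs of disjoint edges of K_{3,2} forming a non-split link in f and the corresponding number for g have the same parity. -/

import Mathlib

/-!
The count is always odd, for every injective map of the vertices of `K_{3,2}` into the circle; the
theorem follows since both `f` and `g` are injective.

Write `a₀, a₁, a₂` and `b₀, b₁` for the two parts. The pairs of disjoint edges are
`{aᵢb₀, aⱼb₁}` with `i ≠ j`. Among the three ways of splitting four distinct points of the circle
into two pairs, exactly one is linked, so exactly one of `{aᵢb₀, aⱼb₁}`, `{aⱼb₀, aᵢb₁}` is linked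
unless `b₀, b₁` separate `aᵢ` from `aⱼ`, and then neither is
(`between_matchings`). Since `b₀, b₁` cut the circle into two arcs, the number of `{i, j}` whose
vertices they separate is `0` or `2`. Hence the count is `3` or `1` (`linkedPairs_ncard_odd`).

The topology enters only through `nonSplitLink_iff`, which translates linking into the linear order
of the arguments in `(-π, π]`.
-/

/-- `f a` and `f b` lie in different connected components of `S¹ \ {f c, f d}`. -/
def NonSplitLink {V : Type*} (f : V → Circle) (a b c d : V) : Prop :=
  connectedComponentIn ({f c, f d}ᶜ : Set Circle) (f a) ≠
    connectedComponentIn ({f c, f d}ᶜ : Set Circle) (f b)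

/-- A graph is intrinsically S¹-linked if for every S¹-embedding (injective map of its
vertices to the circle) there is a pair of disjoint edges forming a non-split link. -/
def IntrinsicallyS1Linked {V : Type*} (G : SimpleGraph V) : Prop :=
  ∀ f : V → Circle, Function.Injective f →
    ∃ a b c d : V, G.Adj a b ∧ G.Adj c d ∧
      ({a, b} : Set V) ∩ ({c, d} : Set V) = ∅ ∧
      NonSplitLink f a b c d

/-- The set of unordered pairs of disjoint edges of `G` forming a non-split link in the
S¹-embedding `f`. -/
def linkedPairs {V : Type*} (G : SimpleGraph V) (f : V → Circle) : Set (Sym2 (Sym2 V)) :=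
  {p | ∃ a b c d : V, p = s(s(a, b), s(c, d)) ∧ G.Adj a b ∧ G.Adj c d ∧
    ({a, b} : Set V) ∩ ({c, d} : Set V) = ∅ ∧ NonSplitLink f a b c d}

open Set

/-- `x` lies strictly between `c` and `d`, the latter being taken in either order. -/
def StrictBetween (x c d : ℝ) : Prop := (c < x ∧ x < d) ∨ (d < x ∧ x < c)

/-- A set of the form `U ∪ W` with `U`, `W` open, disjoint and `U` connected has `U` as the
component of each of its points. -/
lemma connectedComponentIn_eq_of_open_partition {X : Type*} [TopologicalSpace X] {F U W : Set X}
    (hU : IsOpen U) (hW : IsOpen W) (hd : Disjoint U W) (hF : F = U ∪ W)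
    (hc : IsPreconnected U) {x : X} (hx : x ∈ U) : connectedComponentIn F x = U := by
  have hxF : x ∈ F := hF ▸ Or.inl hx
  apply Subset.antisymm
  · refine isPreconnected_connectedComponentIn.subset_left_of_subset_union hU hW hd
      (hF ▸ connectedComponentIn_subset F x) ⟨x, mem_connectedComponentIn hxF, hx⟩
  · exact hc.subset_connectedComponentIn hx (hF ▸ subset_union_left)

lemma isOpenMap_circle_exp : IsOpenMap Circle.exp :=
  isLocalHomeomorph_circleExp.isOpenMap

/-- The components of the circle minus two points with arguments `α < β` are the arcs
`(α, β)` and `(β, α + 2π)`. -/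
lemma component_ne_iff_of_lt {p q c d : Circle} (hlt : Complex.arg c < Complex.arg d)
    (hpc : p ≠ c) (hpd : p ≠ d) (hqc : q ≠ c) (hqd : q ≠ d) :
    connectedComponentIn ({c, d}ᶜ : Set Circle) p ≠ connectedComponentIn ({c, d}ᶜ : Set Circle) q ↔
      ¬ ((Complex.arg c < Complex.arg p ∧ Complex.arg p < Complex.arg d) ↔
        (Complex.arg c < Complex.arg q ∧ Complex.arg q < Complex.arg d)) := by
  set α := Complex.arg c with hα
  set β := Complex.arg d with hβ
  have hα1 : -Real.pi < α := Complex.neg_pi_lt_arg _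
  have hβ2 : β ≤ Real.pi := Complex.arg_le_pi _
  have hec : Circle.exp α = c := Circle.exp_arg c
  have hed : Circle.exp β = d := Circle.exp_arg d
  have hUmem : ∀ z : Circle, z ∈ Circle.exp '' Ioo α β ↔ α < Complex.arg z ∧ Complex.arg z < β := by
    intro z
    constructor
    · rintro ⟨t, ⟨h1, h2⟩, rfl⟩
      rw [Circle.arg_exp (by linarith) (by linarith)]
      exact ⟨h1, h2⟩
    · rintro ⟨h1, h2⟩
      exact ⟨Complex.arg z, ⟨h1, h2⟩, Circle.exp_arg z⟩
  have hWmem : ∀ z : Circle, z ∈ Circle.exp '' Ioo β (α + 2 * Real.pi) ↔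
      β < Complex.arg z ∨ Complex.arg z < α := by
    intro z
    constructor
    · rintro ⟨t, ⟨h1, h2⟩, rfl⟩
      rcases le_or_gt t Real.pi with h | h
      · rw [Circle.arg_exp (by linarith) h]
        exact Or.inl h1
      · rw [← Circle.exp_sub_two_pi t, Circle.arg_exp (by linarith) (by linarith)]
        exact Or.inr (by linarith)
    · have h3 := Complex.neg_pi_lt_arg (z : ℂ)
      have h4 := Complex.arg_le_pi (z : ℂ)
      rintro (h | h)
      · exact ⟨Complex.arg z, ⟨h, by linarith⟩, Circle.exp_arg z⟩
      · exact ⟨Complex.arg z + 2 * Real.pi, ⟨by linarith, by linarith⟩, by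
          rw [Circle.exp_add_two_pi, Circle.exp_arg]⟩
  set U := Circle.exp '' Ioo α β with hUdef
  set W := Circle.exp '' Ioo β (α + 2 * Real.pi) with hWdef
  have hUo : IsOpen U := isOpenMap_circle_exp _ isOpen_Ioo
  have hWo : IsOpen W := isOpenMap_circle_exp _ isOpen_Ioo
  have hUc : IsPreconnected U := isPreconnected_Ioo.image _ Circle.exp.continuous.continuousOn
  have hWc : IsPreconnected W := isPreconnected_Ioo.image _ Circle.exp.continuous.continuousOn
  have hd : Disjoint U W := by
    rw [Set.disjoint_left]
    intro z hz hz'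
    rw [hUmem] at hz
    rw [hWmem] at hz'
    rcases hz' with h | h <;> linarith [hz.1, hz.2]
  have hF : ({c, d}ᶜ : Set Circle) = U ∪ W := by
    ext z
    have e1 : z = c ↔ Complex.arg z = α := Circle.injective_arg.eq_iff.symm
    have e2 : z = d ↔ Complex.arg z = β := Circle.injective_arg.eq_iff.symm
    rw [mem_compl_iff, mem_insert_iff, mem_singleton_iff, mem_union, hUmem, hWmem, e1, e2]
    grind
  have hcU : ∀ z ∈ U, connectedComponentIn ({c, d}ᶜ : Set Circle) z = U := fun z hz =>
    connectedComponentIn_eq_of_open_partition hUo hWo hd hF hUc hz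
  have hcW : ∀ z ∈ W, connectedComponentIn ({c, d}ᶜ : Set Circle) z = W := fun z hz =>
    connectedComponentIn_eq_of_open_partition hWo hUo hd.symm (hF.trans (union_comm _ _)) hWc hz
  have hp : p ∈ U ∪ W := hF ▸ by simp [hpc, hpd]
  have hq : q ∈ U ∪ W := hF ▸ by simp [hqc, hqd]
  have hnot : ∀ z ∈ W, z ∉ U := fun z hz hz' => Set.disjoint_left.1 hd hz' hz
  rw [← hUmem, ← hUmem]
  rcases hp with hp | hp <;> rcases hq with hq | hq
  · simp [hcU p hp, hcU q hq, hp, hq]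
  · have : U ≠ W := fun h => hnot q hq (h ▸ hq)
    simp [hcU p hp, hcW q hq, hp, hnot q hq, this]
  · have : W ≠ U := fun h => hnot p hp (h ▸ hp)
    simp [hcW p hp, hcU q hq, hq, hnot p hp, this]
  · simp [hcW p hp, hcW q hq, hnot p hp, hnot q hq]

lemma nonSplitLink_iff {V : Type*} {f : V → Circle} (hf : Function.Injective f) {a b c d : V}
    (hac : a ≠ c) (had : a ≠ d) (hbc : b ≠ c) (hbd : b ≠ d) (hcd : c ≠ d) :
    NonSplitLink f a b c d ↔
      ¬ (StrictBetween (Complex.arg (f a)) (Complex.arg (f c)) (Complex.arg (f d)) ↔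
        StrictBetween (Complex.arg (f b)) (Complex.arg (f c)) (Complex.arg (f d))) := by
  have hne : Complex.arg (f c) ≠ Complex.arg (f d) := fun h => hcd (hf (Circle.injective_arg h))
  unfold NonSplitLink StrictBetween
  rcases lt_or_gt_of_ne hne with h | h
  · rw [component_ne_iff_of_lt h (hf.ne hac) (hf.ne had) (hf.ne hbc) (hf.ne hbd)]
    grind
  · rw [Set.pair_comm,
      component_ne_iff_of_lt h (hf.ne had) (hf.ne hac) (hf.ne hbd) (hf.ne hbc)]
    grind

/-- Linking is symmetric in the two pairs. -/
lemma between_symm {a b c d : ℝ} (hac : a ≠ c) (had : a ≠ d) (hbc : b ≠ c) (hbd : b ≠ d) :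
    (¬ (StrictBetween a c d ↔ StrictBetween b c d)) ↔
      ¬ (StrictBetween c a b ↔ StrictBetween d a b) := by
  unfold StrictBetween
  grind

/-- Of the two matchings of `{x, y}` with `{c, d}`, exactly one is linked if `x`, `y` are not
separated by `c`, `d`, and neither is otherwise. -/
lemma between_matchings {x y c d : ℝ} (hxy : x ≠ y) (hxc : x ≠ c) (hxd : x ≠ d) (hyc : y ≠ c)
    (hyd : y ≠ d) (hcd : c ≠ d) :
    ((StrictBetween x c d ↔ StrictBetween y c d) →
      ((StrictBetween x y d ↔ StrictBetween c y d) ↔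
        ¬ (StrictBetween y x d ↔ StrictBetween c x d))) ∧
    (¬ (StrictBetween x c d ↔ StrictBetween y c d) →
      ((StrictBetween x y d ↔ StrictBetween c y d) ∧
        (StrictBetween y x d ↔ StrictBetween c x d))) := by
  unfold StrictBetween
  grind

/-- The linked pairs of `K_{3,2}` are parametrised by the ordered pairs `i ≠ j` for which
`{aᵢb₀, aⱼb₁}` is linked. -/
lemma linkedPairs_eq_image {f : Fin 3 ⊕ Fin 2 → Circle} (hf : Function.Injective f) :
    linkedPairs (completeBipartiteGraph (Fin 3) (Fin 2)) f =
      (fun ij : Fin 3 × Fin 3 =>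
        (s(s(Sum.inl ij.1, Sum.inr 0), s(Sum.inl ij.2, Sum.inr 1)) :
          Sym2 (Sym2 (Fin 3 ⊕ Fin 2)))) ''
      {ij | ij.1 ≠ ij.2 ∧
        NonSplitLink f (Sum.inl ij.1) (Sum.inr 0) (Sum.inl ij.2) (Sum.inr 1)} := by
  have hswap : ∀ a b c d, NonSplitLink f a b c d → NonSplitLink f b a c d :=
    fun a b c d h => Ne.symm h
  have hswap2 : ∀ a b c d, NonSplitLink f a b c d → NonSplitLink f a b d c := by
    intro a b c d h
    unfold NonSplitLink at *
    rwa [Set.pair_comm]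
  have hsymm : ∀ a b c d, a ≠ c → a ≠ d → b ≠ c → b ≠ d → a ≠ b → c ≠ d →
      NonSplitLink f a b c d → NonSplitLink f c d a b := by
    intro a b c d h1 h2 h3 h4 h5 h6 h
    have hne : ∀ {x y}, x ≠ y → Complex.arg (f x) ≠ Complex.arg (f y) :=
      fun hxy h => hxy (hf (Circle.injective_arg h))
    rw [nonSplitLink_iff hf h1 h2 h3 h4 h6] at h
    rw [nonSplitLink_iff hf h1.symm h3.symm h2.symm h4.symm h5]
    exact (between_symm (hne h1) (hne h2) (hne h3) (hne h4)).1 h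
  -- Both edges written with their left endpoint first.
  have key : ∀ (i j : Fin 3) (k l : Fin 2), i ≠ j → k ≠ l →
      NonSplitLink f (Sum.inl i) (Sum.inr k) (Sum.inl j) (Sum.inr l) →
      ∃ i' j' : Fin 3, i' ≠ j' ∧
        NonSplitLink f (Sum.inl i') (Sum.inr 0) (Sum.inl j') (Sum.inr 1) ∧
        (s(s(Sum.inl i', Sum.inr 0), s(Sum.inl j', Sum.inr 1)) :
          Sym2 (Sym2 (Fin 3 ⊕ Fin 2))) =
          s(s(Sum.inl i, Sum.inr k), s(Sum.inl j, Sum.inr l)) := by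
    intro i j k l hij hkl h
    have hkl' : (k = 0 ∧ l = 1) ∨ (k = 1 ∧ l = 0) := by
      clear h
      revert k l
      decide
    rcases hkl' with ⟨rfl, rfl⟩ | ⟨rfl, rfl⟩
    · exact ⟨i, j, hij, h, rfl⟩
    · exact ⟨j, i, hij.symm,
        hsymm _ _ _ _ (by simpa using hij) (by simp) (by simp) (by simp) (by simp) (by simp) h,
        Sym2.eq_swap⟩
  ext p
  constructor
  · rintro ⟨a, b, c, d, rfl, hab, hcd, hdis, h⟩
    have hdis' : a ≠ c ∧ a ≠ d ∧ b ≠ c ∧ b ≠ d := by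
      rw [← Set.disjoint_iff_inter_eq_empty] at hdis
      simp only [Set.disjoint_insert_left, Set.disjoint_singleton_left, Set.mem_insert_iff,
        Set.mem_singleton_iff] at hdis
      tauto
    obtain ⟨h1, h2, h3, h4⟩ := hdis'
    simp only [Set.mem_image, Set.mem_ofPred_eq, Prod.exists]
    rcases a with a | a <;> rcases b with b | b <;> simp at hab <;>
      rcases c with c | c <;> rcases d with d | d <;> simp at hcd
    · obtain ⟨i, j, hij, hl, he⟩ := key a c b d (by simpa using h1) (by simpa using h4) h
      exact ⟨i, j, ⟨hij, hl⟩, he⟩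
    · obtain ⟨i, j, hij, hl, he⟩ := key a d b c (by simpa using h2) (by simpa using h3)
        (hswap2 _ _ _ _ h)
      exact ⟨i, j, ⟨hij, hl⟩, he.trans (by rw [Sym2.eq_swap (a := Sum.inl d)])⟩
    · obtain ⟨i, j, hij, hl, he⟩ := key b c a d (by simpa using h3) (by simpa using h2)
        (hswap _ _ _ _ h)
      exact ⟨i, j, ⟨hij, hl⟩, he.trans (by rw [Sym2.eq_swap (a := Sum.inl b)])⟩
    · obtain ⟨i, j, hij, hl, he⟩ := key b d a c (by simpa using h4) (by simpa using h1)
        (hswap _ _ _ _ (hswap2 _ _ _ _ h))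
      exact ⟨i, j, ⟨hij, hl⟩,
        he.trans (by rw [Sym2.eq_swap (a := Sum.inl b), Sym2.eq_swap (a := Sum.inl d)])⟩
  · rintro ⟨⟨i, j⟩, ⟨hij, h⟩, rfl⟩
    refine ⟨_, _, _, _, rfl, by simp, by simp, ?_, h⟩
    rw [← Set.disjoint_iff_inter_eq_empty]
    simpa using hij.symm

lemma linkedPairs_ncard_odd {f : Fin 3 ⊕ Fin 2 → Circle} (hf : Function.Injective f) :
    (linkedPairs (completeBipartiteGraph (Fin 3) (Fin 2)) f).ncard % 2 = 1 := by
  classical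
  rw [linkedPairs_eq_image hf, Set.ncard_image_of_injective]
  swap
  · rintro ⟨i, j⟩ ⟨k, l⟩ h
    simpa using h
  have hne : ∀ {x y}, x ≠ y → Complex.arg (f x) ≠ Complex.arg (f y) :=
    fun hxy h => hxy (hf (Circle.injective_arg h))
  set P : Fin 3 → Fin 3 → Prop := fun i j =>
    NonSplitLink f (Sum.inl i) (Sum.inr 0) (Sum.inl j) (Sum.inr 1) with hP
  set B : Fin 3 → Prop := fun i => StrictBetween (Complex.arg (f (Sum.inl i)))
    (Complex.arg (f (Sum.inr 0))) (Complex.arg (f (Sum.inr 1))) with hB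
  have hPB : ∀ i j, i ≠ j →
      ((B i ↔ B j) → (P i j ↔ ¬ P j i)) ∧ (¬ (B i ↔ B j) → ¬ P i j ∧ ¬ P j i) := by
    intro i j hij
    have hij' : (Sum.inl i : Fin 3 ⊕ Fin 2) ≠ Sum.inl j := by simpa using hij
    have h := between_matchings (hne hij') (hne (x := Sum.inl i) (y := Sum.inr 0) (by simp))
      (hne (x := Sum.inl i) (y := Sum.inr 1) (by simp))
      (hne (x := Sum.inl j) (y := Sum.inr 0) (by simp))
      (hne (x := Sum.inl j) (y := Sum.inr 1) (by simp))
      (hne (x := Sum.inr 0) (y := Sum.inr 1) (by simp))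
    simp only [hP, hB]
    rw [nonSplitLink_iff hf hij' (by simp) (by simp) (by simp) (by simp),
      nonSplitLink_iff hf hij'.symm (by simp) (by simp) (by simp) (by simp)]
    tauto
  have hcard : {ij : Fin 3 × Fin 3 | ij.1 ≠ ij.2 ∧ P ij.1 ij.2}.ncard =
      ∑ i, ∑ j, if i ≠ j ∧ P i j then 1 else 0 := by
    rw [← Fintype.sum_prod_type' (f := fun i j => if i ≠ j ∧ P i j then 1 else 0),
      ← Finset.card_filter, ← Set.ncard_coe_finset]
    simp
  change {ij : Fin 3 × Fin 3 | ij.1 ≠ ij.2 ∧ P ij.1 ij.2}.ncard % 2 = 1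
  rw [hcard]
  -- The two pairs on `aᵢ, aⱼ, b₀, b₁` contribute `1` or `0` to the count.
  have hsum : ∀ i j, i ≠ j → (if P i j then 1 else 0) + (if P j i then 1 else 0) =
      if (B i ↔ B j) then 1 else 0 := by
    intro i j hij
    obtain ⟨h1, h2⟩ := hPB i j hij
    by_cases hb : B i ↔ B j
    · by_cases hp : P j i <;> simp [hb, hp, h1 hb]
    · simp [hb, h2 hb]
  have h01 := hsum 0 1 (by decide)
  have h02 := hsum 0 2 (by decide)
  have h12 := hsum 1 2 (by decide)
  clear hcard hsum hPB
  clear_value P B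
  simp only [Fin.sum_univ_three, ne_eq, not_true_eq_false, false_and, if_false, Fin.reduceEq,
    not_false_eq_true, true_and]
  by_cases b0 : B 0 <;> by_cases b1 : B 1 <;> by_cases b2 : B 2 <;>
    simp only [b0, b1, b2, iff_true, iff_false, not_true_eq_false, not_false_eq_true,
      if_true, if_false] at h01 h02 h12 <;> omega

theorem K32_link_count_parity_invariant_under_transposition
    (f g : Fin 3 ⊕ Fin 2 → Circle)
    (hf : Function.Injective f) (hg : Function.Injective g)
    (u v : Fin 3 ⊕ Fin 2) (huv : u ≠ v)
    (hfg : g = f ∘ (Equiv.swap u v)) :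
    (linkedPairs (completeBipartiteGraph (Fin 3) (Fin 2)) f).ncard % 2 =
      (linkedPairs (completeBipartiteGraph (Fin 3) (Fin 2)) g).ncard % 2 := by
  rw [linkedPairs_ncard_odd hf, linkedPairs_ncard_odd hg]
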